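/- Suppose G is a finite group, H₁ and H₂ are subgroups of G such that for every conjugacy class C of G one has |C ∩ H₁| = |C ∩ H₂|, and G acts linearly on a complex vector space V. Then there is a linear isomorphism ι : V^{H₁} → V^{H₂} such that for every linear endomorphism Δ of V that commutes with the action of every element of G (note such a Δ maps V^{H₁} into V^{H₁} and V^{H₂} into V^{H₂}), one has ι ∘ Δ = Δ ∘ ι on V^{H₁}. -/

import Mathlib

/-- The subspace of vectors of `V` fixed by every element of the subgroup `H`
under the representation `ρ`. -/
def fixedSubmodule {G V : Type*} [Group G] [AddCommGroup V] [Module ℂ V]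
    (ρ : Representation ℂ G V) (H : Subgroup G) : Submodule ℂ V where
  carrier := {v | ∀ h ∈ H, ρ h v = v}
  add_mem' := by
    intro a b ha hb h hh
    simp [map_add, ha h hh, hb h hh]
  zero_mem' := by intro h hh; simp
  smul_mem' := by
    intro c v hv h hh
    simp [map_smul, hv h hh]

theorem mvn_end {W : Type*} [AddCommGroup W] [Module ℂ W] [FiniteDimensional ℂ W]
    (e f : Module.End ℂ W) (he : e * e = e) (hf : f * f = f)
    (h : LinearMap.trace ℂ W e = LinearMap.trace ℂ W f) :
    ∃ u w : Module.End ℂ W, w * u = e ∧ u * w = f := by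
  have key : ∀ e : Module.End ℂ W, e * e = e → LinearMap.IsProj (LinearMap.range e) e := by
    intro e he
    refine ⟨fun x => ⟨x, rfl⟩, ?_⟩
    rintro _ ⟨y, rfl⟩
    exact congrArg (fun t : Module.End ℂ W => t y) he
  have h1 := (key e he).trace
  have h2 := (key f hf).trace
  have h3 : Module.finrank ℂ (LinearMap.range e) = Module.finrank ℂ (LinearMap.range f) := by
    rw [h1, h2] at h
    exact_mod_cast h
  let φ := LinearEquiv.ofFinrankEq _ _ h3
  refine ⟨(LinearMap.range f).subtype ∘ₗ φ.toLinearMap ∘ₗ e.rangeRestrict,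
    (LinearMap.range e).subtype ∘ₗ φ.symm.toLinearMap ∘ₗ f.rangeRestrict, ?_, ?_⟩
  · ext x
    have : f.rangeRestrict (φ (e.rangeRestrict x) : W) = φ (e.rangeRestrict x) :=
      Subtype.ext ((key f hf).map_id _ (φ (e.rangeRestrict x)).2)
    simp [this]
  · ext x
    have : e.rangeRestrict (φ.symm (f.rangeRestrict x) : W) = φ.symm (f.rangeRestrict x) :=
      Subtype.ext ((key e he).map_id _ (φ.symm (f.rangeRestrict x)).2)
    simp [this]

theorem mvn_matrix {n : ℕ} (e f : Matrix (Fin n) (Fin n) ℂ) (he : e * e = e) (hf : f * f = f)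
    (h : e.trace = f.trace) :
    ∃ u w : Matrix (Fin n) (Fin n) ℂ, w * u = e ∧ u * w = f := by
  let T := Matrix.toLinAlgEquiv' (R := ℂ) (n := Fin n)
  obtain ⟨u, w, h1, h2⟩ := mvn_end (T e) (T f) (by rw [← map_mul, he]) (by rw [← map_mul, hf])
    (by
      have := Matrix.trace_toLin'_eq e
      have := Matrix.trace_toLin'_eq f
      change LinearMap.trace ℂ _ (Matrix.toLin' e) = LinearMap.trace ℂ _ (Matrix.toLin' f)
      simp_all)
  refine ⟨T.symm u, T.symm w, ?_, ?_⟩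
  · rw [← map_mul, h1]; simp
  · rw [← map_mul, h2]; simp

theorem mvn_algebra {A : Type*} [Ring A] [Algebra ℂ A] [IsSemisimpleRing A]
    [FiniteDimensional ℂ A] (e f : A) (he : e * e = e) (hf : f * f = f)
    (h : ∀ τ : A →ₗ[ℂ] ℂ, (∀ a b, τ (a * b) = τ (b * a)) → τ e = τ f) :
    ∃ u w : A, w * u = e ∧ u * w = f := by
  obtain ⟨n, d, _, ⟨T⟩⟩ := IsSemisimpleRing.exists_algEquiv_pi_matrix_of_isAlgClosed ℂ A
  have : ∀ i, ∃ u w : Matrix (Fin (d i)) (Fin (d i)) ℂ, w * u = T e i ∧ u * w = T f i := by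
    intro i
    apply mvn_matrix
    · rw [← Pi.mul_apply, ← map_mul, he]
    · rw [← Pi.mul_apply, ← map_mul, hf]
    · refine h (Matrix.traceLinearMap _ ℂ ℂ ∘ₗ LinearMap.proj i ∘ₗ T.toLinearMap) ?_
      intro a b
      simp [Matrix.trace_mul_comm (T a i)]
  choose u w h1 h2 using this
  refine ⟨T.symm u, T.symm w, ?_, ?_⟩
  · rw [← map_mul, AlgEquiv.symm_apply_eq]; ext1 i; exact h1 i
  · rw [← map_mul, AlgEquiv.symm_apply_eq]; ext1 i; exact h2 i

theorem exists_conj_equiv {G : Type*} [Group G] [Finite G] (H₁ H₂ : Subgroup G)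
    (hac : ∀ g : G, Nat.card {x : G // IsConj g x ∧ x ∈ H₁} =
        Nat.card {x : G // IsConj g x ∧ x ∈ H₂}) :
    ∃ σ : H₁ ≃ H₂, ∀ h : H₁, IsConj (h : G) (σ h : G) := by
  classical
  have key : ∀ (H : Subgroup G) (g : G), Nat.card {x : H // ConjClasses.mk (x : G) = ConjClasses.mk g} =
      Nat.card {x : G // IsConj g x ∧ x ∈ H} := by
    intro H g
    refine Nat.card_congr ⟨fun x => ⟨x.1.1, ?_, x.1.2⟩, fun x => ⟨⟨x.1, x.2.2⟩, ?_⟩, ?_, ?_⟩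
    · exact (ConjClasses.mk_eq_mk_iff_isConj.1 x.2).symm
    · exact ConjClasses.mk_eq_mk_iff_isConj.2 x.2.1.symm
    · intro x; rfl
    · intro x; rfl
  have : ∀ c : ConjClasses G, Nonempty ({x : H₁ // ConjClasses.mk (x : G) = c} ≃
      {x : H₂ // ConjClasses.mk (x : G) = c}) := by
    intro c
    obtain ⟨g, rfl⟩ := ConjClasses.mk_surjective c
    exact Finite.card_eq.1 (by rw [key, key, hac])
  have φ := fun c => Classical.choice (this c)
  let f₁ : H₁ → ConjClasses G := fun x => ConjClasses.mk (x : G)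
  let f₂ : H₂ → ConjClasses G := fun x => ConjClasses.mk (x : G)
  refine ⟨((Equiv.sigmaFiberEquiv f₁).symm.trans (Equiv.sigmaCongrRight φ)).trans
    (Equiv.sigmaFiberEquiv f₂), fun h => ?_⟩
  exact ConjClasses.mk_eq_mk_iff_isConj.1 (φ (f₁ h) ⟨h, rfl⟩).2.symm

/-- The averaging element of a subgroup in the group algebra. -/
noncomputable def avgElt {G : Type*} [Group G] (H : Subgroup G) [Fintype H] : MonoidAlgebra ℂ G :=
  (Fintype.card H : ℂ)⁻¹ • ∑ h : H, MonoidAlgebra.of ℂ G (h : G)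

theorem of_mul_avgElt {G : Type*} [Group G] (H : Subgroup G) [Fintype H] (g : H) :
    MonoidAlgebra.of ℂ G (g : G) * avgElt H = avgElt H := by
  unfold avgElt
  rw [mul_smul_comm, Finset.mul_sum]
  congr 1
  refine Fintype.sum_equiv (Equiv.mulLeft g) _ _ fun x => ?_
  rw [← map_mul]; rfl

theorem avgElt_mul_self {G : Type*} [Group G] (H : Subgroup G) [Fintype H] :
    avgElt H * avgElt H = avgElt H := by
  conv_lhs => enter [1]; unfold avgElt
  rw [smul_mul_assoc, Finset.sum_mul, Finset.sum_congr rfl (fun g _ => of_mul_avgElt H g)]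
  rw [Finset.sum_const, Finset.card_univ, ← Nat.cast_smul_eq_nsmul ℂ, smul_smul,
    inv_mul_cancel₀ (by simp), one_smul]

theorem mem_fixed_iff {G V : Type*} [Group G] [AddCommGroup V] [Module ℂ V]
    (ρ : Representation ℂ G V) (H : Subgroup G) [Fintype H] (v : V) :
    v ∈ fixedSubmodule ρ H ↔ ρ.asAlgebraHom (avgElt H) v = v := by
  constructor
  · intro hv
    have hv' : ∀ h : H, ρ h v = v := fun h => hv h h.2
    simp only [avgElt, map_smul, map_sum, LinearMap.smul_apply, LinearMap.sum_apply,
      Representation.asAlgebraHom_of, hv']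
    rw [Finset.sum_const, Finset.card_univ, ← Nat.cast_smul_eq_nsmul ℂ, smul_smul,
      inv_mul_cancel₀ (by simp), one_smul]
  · intro hv h hh
    rw [← hv, ← Representation.asAlgebraHom_of, ← Module.End.mul_apply, ← map_mul]
    rw [of_mul_avgElt H ⟨h, hh⟩]


/-- If `G` is a finite group, `H₁, H₂ ≤ G` are almost conjugate
(`|C ∩ H₁| = |C ∩ H₂|` for every conjugacy class `C`), and `G` acts linearly on a
complex vector space `V`, then there is a linear isomorphism `ι : V^{H₁} ≃ V^{H₂}`
commuting with every linear endomorphism `Δ` of `V` that commutes with the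
`G`-action (such a `Δ` preserves `V^{H₁}` and `V^{H₂}`). -/
theorem stmt_1 {G : Type*} [Group G] [Finite G] (H₁ H₂ : Subgroup G)
    {V : Type*} [AddCommGroup V] [Module ℂ V] (ρ : Representation ℂ G V)
    (hac : ∀ g : G, Nat.card {x : G // IsConj g x ∧ x ∈ H₁} =
        Nat.card {x : G // IsConj g x ∧ x ∈ H₂}) :
    ∃ ι : ↥(fixedSubmodule ρ H₁) ≃ₗ[ℂ] ↥(fixedSubmodule ρ H₂),
      ∀ (Δ : V →ₗ[ℂ] V), (∀ g : G, Δ ∘ₗ (ρ g) = (ρ g) ∘ₗ Δ) →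
        ∀ (h₁ : ∀ v ∈ fixedSubmodule ρ H₁, Δ v ∈ fixedSubmodule ρ H₁)
          (h₂ : ∀ v ∈ fixedSubmodule ρ H₂, Δ v ∈ fixedSubmodule ρ H₂),
          ι.toLinearMap ∘ₗ (Δ.restrict h₁) = (Δ.restrict h₂) ∘ₗ ι.toLinearMap := by

  classical
  have := Fintype.ofFinite G
  have : NeZero (Nat.card G : ℂ) := ⟨by simp⟩
  have : FiniteDimensional ℂ (MonoidAlgebra ℂ G) := 
    Module.Finite.of_basis (MonoidAlgebra.basis G ℂ)
  obtain ⟨σ, hσ⟩ := exists_conj_equiv H₁ H₂ hac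
  obtain ⟨u, w, hwu, huw⟩ := mvn_algebra (avgElt H₁) (avgElt H₂) (avgElt_mul_self H₁)
    (avgElt_mul_self H₂) (by
      intro τ hτ
      simp only [avgElt, map_smul, map_sum]
      rw [Fintype.card_congr σ]
      congr 1
      refine Fintype.sum_equiv σ _ _ fun x => ?_
      obtain ⟨c, hc⟩ := isConj_iff.1 (hσ x)
      rw [← hc, map_mul, hτ, ← map_mul]
      simp)
  let R := ρ.asAlgebraHom
  have hwu' : ∀ v, R w (R u v) = R (avgElt H₁) v := fun v => by
    rw [← hwu, map_mul]; rfl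
  have huw' : ∀ v, R u (R w v) = R (avgElt H₂) v := fun v => by
    rw [← huw, map_mul]; rfl
  have hu : ∀ v ∈ fixedSubmodule ρ H₁, R u v ∈ fixedSubmodule ρ H₂ := fun v hv => by
    rw [mem_fixed_iff] at hv ⊢
    change R _ _ = _
    rw [← huw', hwu']
    exact congrArg _ hv
  have hw : ∀ v ∈ fixedSubmodule ρ H₂, R w v ∈ fixedSubmodule ρ H₁ := fun v hv => by
    rw [mem_fixed_iff] at hv ⊢
    change R _ _ = _
    rw [← hwu', huw']
    exact congrArg _ hv
  refine ⟨LinearEquiv.ofLinearMap ((R u).restrict hu) ((R w).restrict hw) ?_ ?_, ?_⟩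
  · ext v
    exact (huw' v).trans ((mem_fixed_iff ρ H₂ v.1).1 v.2)
  · ext v
    exact (hwu' v).trans ((mem_fixed_iff ρ H₁ v.1).1 v.2)
  · intro Δ hΔ h₁ h₂
    have hcomm : ∀ (a : MonoidAlgebra ℂ G) (v : V), R a (Δ v) = Δ (R a v) := by
      intro a v
      induction a using MonoidAlgebra.induction_on with
      | of g =>
        simp only [R, Representation.asAlgebraHom_of]
        exact (LinearMap.congr_fun (hΔ g) v).symm
      | add a b ha hb => simp [ha, hb]
      | smul r a ha => simp [ha]
    ext v
    exact hcomm u v
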